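/- arXiv:1312.1382 — 3 statements merged into one kernel-verified Lean document; each statement's English description precedes it below -/
import Mathlib

section
/- Let G = (V,E) be a finite simple undirected graph on n ≥ 2 vertices with at least one edge and let β > 1 be a real number. If an orientation of G is such that every edge of G is valid, then the maximum out-degree satisfies Δ ≤ β·α(G) + ⌈log_β n⌉. -/
open Finset

structure GraphOrientation {V : Type*} [Fintype V] [DecidableEq V] (G : SimpleGraph V) where
  dir : V → V → Bool
  dir_iff : ∀ u v, G.Adj u v ↔ (dir u v ∨ dir v u)
  asymm : ∀ u v, dir u v → ¬ dir v u

namespace GraphOrientation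
variable {V : Type*} [Fintype V] [DecidableEq V] {G : SimpleGraph V}

/-- The out-degree of `u` under orientation `D`. -/
def outDeg (D : GraphOrientation G) (u : V) : ℕ :=
  (Finset.univ.filter fun v => D.dir u v).card

/-- The maximum out-degree `Δ` of the orientation. -/
def maxOutDeg (D : GraphOrientation G) : ℕ :=
  Finset.univ.sup D.outDeg

/-- The edge oriented `u → v` is valid: `d⁺(u) ≤ d⁺(v) + 1`. -/
def Valid (D : GraphOrientation G) (u v : V) : Prop :=
  D.dir u v ∧ D.outDeg u ≤ D.outDeg v + 1

instance (D : GraphOrientation G) (u : V) : DecidablePred (D.Valid u) := by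
  unfold Valid; infer_instance

end GraphOrientation

/-- The set `E(U)` of edges of `G` with both endpoints in `U`. -/
def edgesIn {V : Type*} [Fintype V] [DecidableEq V] (G : SimpleGraph V)
    [DecidableRel G.Adj] (U : Finset V) : Finset (Sym2 V) :=
  G.edgeFinset ∩ U.sym2

/-- The arboricity `α(G) = max_{U ⊆ V, |U| ≥ 2} ⌈|E(U)|/(|U|-1)⌉`. -/
def arboricity {V : Type*} [Fintype V] [DecidableEq V] (G : SimpleGraph V)
    [DecidableRel G.Adj] : ℕ :=
  Finset.univ.sup fun U : Finset V =>
    if 2 ≤ U.card then ⌈((edgesIn G U).card : ℚ) / ((U.card : ℚ) - 1)⌉₊ else 0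

theorem card_edgesIn_le_arboricity_mul {V : Type*} [Fintype V] [DecidableEq V]
    (G : SimpleGraph V) [DecidableRel G.Adj] {U : Finset V} (hU : U.Nonempty) :
    ((edgesIn G U).card : ℝ) ≤ arboricity G * ((U.card : ℝ) - 1) := by
  by_cases h2 : 2 ≤ U.card
  · have hsup : ⌈((edgesIn G U).card : ℚ) / ((U.card : ℚ) - 1)⌉₊ ≤ arboricity G := by
      have h := Finset.le_sup (f := fun U : Finset V =>
        if 2 ≤ U.card then ⌈((edgesIn G U).card : ℚ) / ((U.card : ℚ) - 1)⌉₊ else 0)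
        (Finset.mem_univ U)
      rwa [if_pos h2] at h
    have h2' : (2 : ℚ) ≤ U.card := by exact_mod_cast h2
    have hdiv := (Nat.ceil_le.mp hsup)
    rw [div_le_iff₀ (by linarith)] at hdiv
    exact_mod_cast hdiv
  · have h1 : U.card = 1 := by
      have := hU.card_pos
      omega
    obtain ⟨a, rfl⟩ := Finset.card_eq_one.mp h1
    have hempty : edgesIn G {a} = ∅ := by
      ext e
      induction e with
      | _ x y =>
        simp only [edgesIn, Finset.mem_inter, SimpleGraph.mem_edgeFinset, SimpleGraph.mem_edgeSet,
          Finset.mk_mem_sym2_iff, Finset.mem_singleton, Finset.notMem_empty, iff_false]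
        rintro ⟨hxy, rfl, rfl⟩
        exact hxy.ne rfl
    simp [hempty]

/-- If all out-neighbours of `S ⊆ T` lie in `T`, the edges leaving vertices of `S` are
edges inside `T`. -/
theorem GraphOrientation.sum_outDeg_le_card_edgesIn {V : Type*} [Fintype V] [DecidableEq V]
    {G : SimpleGraph V} [DecidableRel G.Adj] (D : GraphOrientation G) {S T : Finset V}
    (hST : S ⊆ T) (hout : ∀ u ∈ S, ∀ v, D.dir u v → v ∈ T) :
    ∑ u ∈ S, D.outDeg u ≤ (edgesIn G T).card := by
  unfold GraphOrientation.outDeg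
  rw [← Finset.card_sigma]
  refine Finset.card_le_card_of_injOn (fun p => s(p.1, p.2)) ?_ ?_
  · rintro ⟨u, v⟩ h
    simp only [Finset.coe_sigma, Set.mem_sigma_iff, Finset.mem_coe, Finset.mem_filter,
      Finset.mem_univ, true_and] at h
    simp only [edgesIn, Finset.mem_coe, Finset.mem_inter, SimpleGraph.mem_edgeFinset,
      SimpleGraph.mem_edgeSet, Finset.mk_mem_sym2_iff]
    exact ⟨(D.dir_iff u v).mpr (Or.inl h.2), hST h.1, hout u h.1 v h.2⟩
  · rintro ⟨u, v⟩ h ⟨u', v'⟩ h' heq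
    simp only [Finset.coe_sigma, Set.mem_sigma_iff, Finset.mem_coe, Finset.mem_filter,
      Finset.mem_univ, true_and] at h h'
    rcases Sym2.eq_iff.mp heq with ⟨rfl, rfl⟩ | ⟨rfl, rfl⟩
    · rfl
    · exact absurd h'.2 (D.asymm _ _ h.2)

/-- If every edge of `G` is valid under the orientation `D`, then
`Δ ≤ β·α(G) + ⌈log_β n⌉` for every real `β > 1`. -/
theorem max_outDeg_le_of_all_valid {V : Type*} [Fintype V] [DecidableEq V]
    (G : SimpleGraph V) [DecidableRel G.Adj]
    (hn : 2 ≤ Fintype.card V) (hE : G.edgeSet.Nonempty)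
    (β : ℝ) (hβ : 1 < β) (D : GraphOrientation G)
    (hvalid : ∀ u v : V, D.dir u v → D.outDeg u ≤ D.outDeg v + 1) :
    (D.maxOutDeg : ℝ) ≤ β * arboricity G + ⌈Real.logb β (Fintype.card V)⌉ := by
  have hn' : (2 : ℝ) ≤ Fintype.card V := by exact_mod_cast hn
  have hlog : 0 ≤ ⌈Real.logb β (Fintype.card V)⌉ :=
    Int.ceil_nonneg (Real.logb_nonneg hβ (by linarith))
  obtain ⟨L, hL⟩ := Int.eq_ofNat_of_zero_le hlog
  have hpow : (Fintype.card V : ℝ) ≤ β ^ L := by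
    have h := Int.le_ceil (Real.logb β (Fintype.card V))
    rw [hL, Real.logb_le_iff_le_rpow hβ (by linarith)] at h
    simpa using h
  rw [hL]
  by_contra! hlt
  push_cast at hlt
  -- `W i` collects the vertices whose out-degree is within `i` of the maximum.
  let W : ℕ → Finset V := fun i => Finset.univ.filter fun v => D.maxOutDeg ≤ D.outDeg v + i
  have hW0 : (W 0).Nonempty := by
    have : Nonempty V := Fintype.card_pos_iff.mp (by omega)
    obtain ⟨v, -, hv⟩ := Finset.exists_mem_eq_sup Finset.univ Finset.univ_nonempty D.outDeg
    exact ⟨v, Finset.mem_filter.mpr ⟨Finset.mem_univ v, hv.le⟩⟩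
  have hWmono : ∀ i j, i ≤ j → W i ⊆ W j := by
    intro i j hij v hv
    simp only [W, Finset.mem_filter, Finset.mem_univ, true_and] at hv ⊢
    omega
  have hgrow : ∀ i ≤ L, β * (W i).card < (W (i + 1)).card := by
    intro i hi
    have hne : (W i).Nonempty := hW0.mono (hWmono 0 i (Nat.zero_le i))
    have hsum : ∑ u ∈ W i, D.outDeg u ≤ (edgesIn G (W (i + 1))).card := by
      refine D.sum_outDeg_le_card_edgesIn (hWmono _ _ i.le_succ) fun u hu v huv => ?_
      have := hvalid u v huv
      simp only [W, Finset.mem_filter, Finset.mem_univ, true_and] at hu ⊢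
      omega
    have hsum' : (∑ u ∈ W i, (D.outDeg u : ℝ)) ≤ (edgesIn G (W (i + 1))).card := by
      exact_mod_cast hsum
    have hlow : ((W i).card : ℝ) * (D.maxOutDeg - i) ≤ ∑ u ∈ W i, (D.outDeg u : ℝ) := by
      rw [← nsmul_eq_mul]
      refine Finset.card_nsmul_le_sum _ _ _ fun u hu => ?_
      simp only [W, Finset.mem_filter, Finset.mem_univ, true_and] at hu
      have : (D.maxOutDeg : ℝ) ≤ D.outDeg u + i := by exact_mod_cast hu
      linarith
    have hup := card_edgesIn_le_arboricity_mul G (hne.mono (hWmono _ _ i.le_succ))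
    have hcard : (0 : ℝ) < (W i).card := by exact_mod_cast hne.card_pos
    have hiL : (i : ℝ) ≤ L := by exact_mod_cast hi
    have hmul : ((W i).card : ℝ) * (β * arboricity G) < (W i).card * (D.maxOutDeg - i) :=
      mul_lt_mul_of_pos_left (by linarith) hcard
    have hα : (0 : ℝ) ≤ arboricity G := Nat.cast_nonneg _
    refine lt_of_mul_lt_mul_left ?_ hα
    linarith
  have hbound : ∀ i ≤ L, β ^ i ≤ (W i).card := by
    intro i
    induction i with
    | zero => intro _; simpa using hW0.card_pos
    | succ k ih =>
      intro hk
      have h := mul_le_mul_of_nonneg_left (ih (by omega)) (by linarith : (0 : ℝ) ≤ β)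
      rw [pow_succ']
      exact h.trans (hgrow k (by omega)).le
  have hlast := hgrow L le_rfl
  have htop : ((W (L + 1)).card : ℝ) ≤ Fintype.card V := by
    exact_mod_cast Finset.card_le_univ _
  nlinarith [hbound L le_rfl]
end

section
/- Let D be an orientation of a finite simple graph G in which every edge is valid, let u, v be distinct vertices with {u,v} ∉ E and d⁺_D(u) ≤ d⁺_D(v), let D' be the orientation of G + {u,v} that agrees with D on E and orients the new edge as u→v, and suppose some edge {u,v'} (with v' ≠ v), oriented u→v' in D', is violated in D'. Let D'' be the orientation of G'' = (G + {u,v}) − {u,v'} obtained by restricting D'. Then every edge of G'' is valid in D'', d⁺_{D''}(u) = d⁺_D(u), and d⁺_{D''}(v') = d⁺_{D''}(u) − 1. -/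
open Finset

namespace GraphOrientation

variable {V : Type*} [Fintype V] [DecidableEq V] {G H : SimpleGraph V}

theorem adj_of_dir (D : GraphOrientation G) {a b : V} (h : D.dir a b) : G.Adj a b :=
  (D.dir_iff a b).2 (Or.inl h)

/-- An orientation of `H` with which `D` agrees on the edges of `H` is the restriction of `D`. -/
theorem dir_iff_of_agree (D : GraphOrientation G) (D₀ : GraphOrientation H)
    (hagree : ∀ a b, H.Adj a b → D.dir a b = D₀.dir a b) (a b : V) :
    D₀.dir a b ↔ D.dir a b ∧ H.Adj a b := by
  constructor
  · intro h
    exact ⟨by rw [hagree a b (D₀.adj_of_dir h)]; exact h, D₀.adj_of_dir h⟩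
  · rintro ⟨h, hH⟩
    rw [← hagree a b hH]
    exact h

theorem outDeg_congr {D : GraphOrientation G} {D₀ : GraphOrientation H} {a : V}
    (h : ∀ b, D₀.dir a b ↔ D.dir a b) : D₀.outDeg a = D.outDeg a := by
  simp only [outDeg, h]

/-- Removing a single out-neighbour lowers the out-degree by one. -/
theorem outDeg_add_one {D : GraphOrientation G} {D₀ : GraphOrientation H} {a c : V}
    (hc : D.dir a c) (h : ∀ b, D₀.dir a b ↔ D.dir a b ∧ b ≠ c) :
    D₀.outDeg a + 1 = D.outDeg a := by
  have : (univ.filter fun b => D₀.dir a b) = (univ.filter fun b => D.dir a b).erase c := by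
    ext b
    simp [h, and_comm]
  rw [outDeg, this]
  exact card_erase_add_one (by simpa using hc)

/-- Dropping the single edge oriented `u → w` lowers the out-degree of `u` by one and
leaves all other out-degrees unchanged. -/
theorem outDeg_of_dir_iff {D : GraphOrientation G} {D₀ : GraphOrientation H} {u w : V}
    (hw : D.dir u w) (h : ∀ a b, D₀.dir a b ↔ D.dir a b ∧ ¬ (a = u ∧ b = w)) :
    D₀.outDeg u + 1 = D.outDeg u ∧ ∀ a, a ≠ u → D₀.outDeg a = D.outDeg a :=
  ⟨outDeg_add_one hw fun b => by simp [h], fun a ha => outDeg_congr fun b => by simp [h, ha]⟩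

end GraphOrientation

/-- Insert a non-edge `{u,v}` (with `d⁺(u) ≤ d⁺(v)`) into a graph all of
whose edges are valid, orienting it `u → v`; suppose the edge `{u,v'}` (`v' ≠ v`),
oriented `u → v'`, is violated in the new orientation `D'`. Restrict `D'` to
`G'' = (G + {u,v}) − {u,v'}`, obtaining `D''`. Then every edge of `G''` is valid in
`D''`, `d⁺_{D''}(u) = d⁺_D(u)`, and `d⁺_{D''}(v') = d⁺_{D''}(u) − 1`. -/
theorem insert_flip_valid {V : Type*} [Fintype V] [DecidableEq V]
    (G : SimpleGraph V) (u v : V) (huv : u ≠ v) (hne : ¬ G.Adj u v)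
    (D : GraphOrientation G)
    (hvalid : ∀ a b : V, D.dir a b → D.outDeg a ≤ D.outDeg b + 1)
    (hdeg : D.outDeg u ≤ D.outDeg v)
    (D' : GraphOrientation (G ⊔ SimpleGraph.edge u v))
    (hagree : ∀ a b : V, G.Adj a b → D'.dir a b = D.dir a b)
    (hnew : D'.dir u v)
    (v' : V) (hv' : v' ≠ v) (hdir : D'.dir u v')
    (hviol : ¬ D'.outDeg u ≤ D'.outDeg v' + 1)
    (D'' : GraphOrientation ((G ⊔ SimpleGraph.edge u v).deleteEdges {s(u, v')}))
    (hagree'' : ∀ a b : V,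
      ((G ⊔ SimpleGraph.edge u v).deleteEdges {s(u, v')}).Adj a b →
        D''.dir a b = D'.dir a b) :
    (∀ a b : V, D''.dir a b → D''.outDeg a ≤ D''.outDeg b + 1) ∧
      D''.outDeg u = D.outDeg u ∧
      D''.outDeg v' + 1 = D''.outDeg u := by
  have hD (a b : V) : D.dir a b ↔ D'.dir a b ∧ ¬ (a = u ∧ b = v) := by
    rw [D'.dir_iff_of_agree D hagree]
    refine and_congr_right fun h => ⟨?_, fun hab => ?_⟩
    · rintro hG ⟨rfl, rfl⟩
      exact hne hG
    · rcases (SimpleGraph.sup_adj _ _ _ _).1 (D'.adj_of_dir h) with hG | hE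
      · exact hG
      · rcases ((SimpleGraph.edge_adj ..).1 hE).1 with hE | ⟨rfl, rfl⟩
        · exact absurd (by tauto) hab
        · exact absurd h (D'.asymm _ _ hnew)
  have hD'' (a b : V) : D''.dir a b ↔ D'.dir a b ∧ ¬ (a = u ∧ b = v') := by
    rw [D'.dir_iff_of_agree D'' fun a b h => (hagree'' a b h).symm]
    refine and_congr_right fun h => ?_
    rw [SimpleGraph.deleteEdges_adj, Set.mem_singleton_iff, Sym2.eq_iff]
    refine ⟨fun hab => by tauto, fun hab => ⟨D'.adj_of_dir h, ?_⟩⟩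
    rintro (hE | ⟨rfl, rfl⟩)
    · exact hab hE
    · exact D'.asymm _ _ hdir h
  obtain ⟨hu, hother⟩ := GraphOrientation.outDeg_of_dir_iff hnew hD
  obtain ⟨hu'', hother''⟩ := GraphOrientation.outDeg_of_dir_iff hdir hD''
  have hdeg_eq (a : V) : D''.outDeg a = D.outDeg a := by
    by_cases ha : a = u
    · subst ha
      omega
    · rw [hother'' a ha, hother a ha]
  have hv'u : v' ≠ u := (D'.adj_of_dir hdir).ne'
  have hle := hvalid u v' ((hD u v').2 ⟨hdir, fun h => hv' h.2⟩)
  have hother_v' := hother v' hv'u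
  refine ⟨fun a b hab => ?_, hdeg_eq u, ?_⟩
  · rw [hdeg_eq, hdeg_eq]
    by_cases h : a = u ∧ b = v
    · obtain ⟨rfl, rfl⟩ := h
      omega
    · exact hvalid a b ((hD a b).2 ⟨((hD'' a b).1 hab).1, h⟩)
  · rw [hdeg_eq, hdeg_eq]
    omega
end

section
/- Let G = (V,E) be a finite simple undirected graph on n vertices with at least one edge, let β > 1 be a real number, set γ = β·α(G), and let D be an orientation of G satisfying: for every vertex w, the number of valid outgoing edges of w is at least min{d⁺(w), γ}. Let r ∈ V, let i ≥ 1 be an integer with d⁺(r) > γ + i, and for 1 ≤ j ≤ i let V_j denote the set of vertices reachable from r by directed paths of length at most j that use only valid edges (with r ∈ V_j). Then |V_j| > β^j for every 1 ≤ j ≤ i. -/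
open Finset

/-- The set of vertices reachable from `r` by directed paths of length at most `j` all of
whose edges are valid (it contains `r` itself, via the empty path). -/
def reachSet {V : Type*} [Fintype V] [DecidableEq V] {G : SimpleGraph V}
    (D : GraphOrientation G) (r : V) (j : ℕ) : Set V :=
  {x | ∃ (k : ℕ) (w : ℕ → V), k ≤ j ∧ w 0 = r ∧ w k = x ∧
    ∀ l < k, D.Valid (w l) (w (l + 1))}

theorem card_edgesIn_add_arboricity_le {V : Type*} [Fintype V] [DecidableEq V]
    (G : SimpleGraph V) [DecidableRel G.Adj] {U : Finset V} (hU : U.Nonempty) :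
    (edgesIn G U).card + arboricity G ≤ arboricity G * U.card := by
  rcases Nat.lt_or_ge U.card 2 with h | h
  · have h1 : U.card = 1 := by have := hU.card_pos; omega
    obtain ⟨a, rfl⟩ := Finset.card_eq_one.mp h1
    have h0 : edgesIn G {a} = ∅ := by
      ext e
      induction e with
      | _ x y =>
        simp only [edgesIn, mem_inter, SimpleGraph.mem_edgeFinset, SimpleGraph.mem_edgeSet,
          mk_mem_sym2_iff, mem_singleton, notMem_empty, iff_false]
        rintro ⟨hxy, rfl, rfl⟩
        exact G.loopless.irrefl _ hxy
    simp [h0]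
  · have hle : ⌈((edgesIn G U).card : ℚ) / ((U.card : ℚ) - 1)⌉₊ ≤ arboricity G := by
      have := Finset.le_sup (f := fun U : Finset V =>
        if 2 ≤ U.card then ⌈((edgesIn G U).card : ℚ) / ((U.card : ℚ) - 1)⌉₊ else 0)
        (Finset.mem_univ U)
      simp only [if_pos h] at this
      exact this
    have h2 : (2 : ℚ) ≤ U.card := by exact_mod_cast h
    have hdiv := Nat.ceil_le.mp hle
    rw [div_le_iff₀ (by linarith)] at hdiv
    have : ((edgesIn G U).card : ℚ) + arboricity G ≤ arboricity G * U.card := by linarith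
    exact_mod_cast this

theorem arboricity_pos {V : Type*} [Fintype V] [DecidableEq V]
    (G : SimpleGraph V) [DecidableRel G.Adj] (hE : G.edgeSet.Nonempty) :
    0 < arboricity G := by
  obtain ⟨e, he⟩ := hE
  induction e with
  | _ x y =>
    have hmem : s(x, y) ∈ edgesIn G {x, y} := by
      simpa [edgesIn] using he
    have hcard := Finset.card_pos.mpr ⟨_, hmem⟩
    have hle := card_edgesIn_add_arboricity_le G (U := {x, y}) (by simp)
    by_contra h
    have h0 : arboricity G = 0 := by omega
    rw [h0] at hle
    omega

namespace GraphOrientation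
variable {V : Type*} [Fintype V] [DecidableEq V] {G : SimpleGraph V}

theorem sum_card_valid_le_card_edgesIn [DecidableRel G.Adj] (D : GraphOrientation G)
    {A B : Finset V} (hAB : A ⊆ B) (hB : ∀ u ∈ A, ∀ x, D.Valid u x → x ∈ B) :
    ∑ u ∈ A, (Finset.univ.filter fun x => D.Valid u x).card ≤ (edgesIn G B).card := by
  rw [← Finset.card_sigma]
  refine Finset.card_le_card_of_injOn (fun p => s(p.1, p.2)) ?_ ?_
  · rintro ⟨u, x⟩ hp
    simp only [coe_sigma, Set.mem_sigma_iff, mem_coe, mem_filter, mem_univ, true_and] at hp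
    simp only [edgesIn, coe_inter, Set.mem_inter_iff, mem_coe, SimpleGraph.mem_edgeFinset,
      SimpleGraph.mem_edgeSet, mk_mem_sym2_iff]
    exact ⟨(D.dir_iff u x).mpr (Or.inl hp.2.1), hAB hp.1, hB u hp.1 x hp.2⟩
  · rintro ⟨u, x⟩ hp ⟨v, y⟩ hq h
    simp only [coe_sigma, Set.mem_sigma_iff, mem_coe, mem_filter, mem_univ, true_and] at hp hq
    simp only [Sym2.eq_iff] at h
    rcases h with ⟨rfl, rfl⟩ | ⟨rfl, rfl⟩
    · rfl
    · exact absurd hq.2.1 (D.asymm _ _ hp.2.1)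

theorem self_mem_reachSet (D : GraphOrientation G) (r : V) (j : ℕ) : r ∈ reachSet D r j :=
  ⟨0, fun _ => r, Nat.zero_le j, rfl, rfl, fun _ hl => absurd hl (Nat.not_lt_zero _)⟩

theorem reachSet_mono (D : GraphOrientation G) (r : V) : Monotone (reachSet D r) := by
  rintro j k hjk x ⟨m, w, hm, h⟩
  exact ⟨m, w, hm.trans hjk, h⟩

theorem mem_reachSet_succ_of_valid (D : GraphOrientation G) {r u x : V} {j : ℕ}
    (hu : u ∈ reachSet D r j) (hx : D.Valid u x) : x ∈ reachSet D r (j + 1) := by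
  obtain ⟨k, w, hk, h0, rfl, hw⟩ := hu
  refine ⟨k + 1, fun l => if l ≤ k then w l else x, by omega, by simpa using h0, by simp, ?_⟩
  intro l hl
  rcases Nat.lt_or_ge l k with h | h
  · simpa [h.le, Nat.succ_le_iff.mpr h] using hw l h
  · obtain rfl : l = k := by omega
    simpa using hx

theorem outDeg_le_of_mem_reachSet (D : GraphOrientation G) {r x : V} {j : ℕ}
    (hx : x ∈ reachSet D r j) : D.outDeg r ≤ D.outDeg x + j := by
  obtain ⟨k, w, hk, rfl, rfl, hw⟩ := hx
  have key : ∀ l ≤ k, D.outDeg (w 0) ≤ D.outDeg (w l) + l := by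
    intro l
    induction l with
    | zero => simp
    | succ l ih =>
      intro hl
      have := ih (by omega)
      have := (hw l (by omega)).2
      omega
  have := key k le_rfl
  omega

/-- One step of expansion: the reachable set grows by a factor of `β` and at least one vertex. -/
theorem mul_card_reachSet_add_one_le [DecidableRel G.Adj] (D : GraphOrientation G)
    (hE : G.edgeSet.Nonempty) {β : ℝ}
    (hinv : ∀ w : V,
      min (D.outDeg w : ℝ) (β * arboricity G) ≤
        ((Finset.univ.filter fun x => D.Valid w x).card : ℝ))
    {r : V} {j : ℕ} (hr : β * arboricity G + j ≤ (D.outDeg r : ℝ)) :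
    β * Nat.card (reachSet D r j) + 1 ≤ (Nat.card (reachSet D r (j + 1)) : ℝ) := by
  classical
  set A := (reachSet D r j).toFinset with hA
  set B := (reachSet D r (j + 1)).toFinset with hB
  have hcA : Nat.card (reachSet D r j) = A.card := by
    rw [Nat.card_eq_fintype_card, hA, Set.toFinset_card]
  have hcB : Nat.card (reachSet D r (j + 1)) = B.card := by
    rw [Nat.card_eq_fintype_card, hB, Set.toFinset_card]
  have hlow : (A.card : ℝ) * (β * arboricity G) ≤
      ∑ u ∈ A, ((Finset.univ.filter fun x => D.Valid u x).card : ℝ) := by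
    rw [← nsmul_eq_mul]
    refine Finset.card_nsmul_le_sum _ _ _ fun u hu => ?_
    have hdeg : (D.outDeg r : ℝ) ≤ D.outDeg u + j := by
      exact_mod_cast D.outDeg_le_of_mem_reachSet (Set.mem_toFinset.mp hu)
    rw [← min_eq_right (show β * arboricity G ≤ (D.outDeg u : ℝ) by linarith)]
    exact hinv u
  have hmid : ∑ u ∈ A, ((Finset.univ.filter fun x => D.Valid u x).card : ℝ) ≤
      (edgesIn G B).card := by
    exact_mod_cast D.sum_card_valid_le_card_edgesIn (A := A) (B := B)
      (Set.toFinset_mono (D.reachSet_mono r j.le_succ))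
      fun u hu x hx => Set.mem_toFinset.mpr
        (D.mem_reachSet_succ_of_valid (Set.mem_toFinset.mp hu) hx)
  have hupp : ((edgesIn G B).card : ℝ) + arboricity G ≤ arboricity G * B.card := by
    exact_mod_cast card_edgesIn_add_arboricity_le G
      ⟨r, Set.mem_toFinset.mpr (D.self_mem_reachSet r (j + 1))⟩
  have hα : (0 : ℝ) < arboricity G := by exact_mod_cast arboricity_pos G hE
  rw [hcA, hcB]
  refine le_of_mul_le_mul_left ?_ hα
  linarith

end GraphOrientation

/-- Under the invariant that each vertex `w` has at least
`min{d⁺(w), γ}` valid outgoing edges (`γ = β·α(G)`), if `d⁺(r) > γ + i`, then the set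
`V_j` of vertices reachable from `r` by valid directed paths of length at most `j`
satisfies `|V_j| > β^j` for all `1 ≤ j ≤ i`. -/
theorem reachSet_card_gt {V : Type*} [Fintype V] [DecidableEq V]
    (G : SimpleGraph V) [DecidableRel G.Adj] (hE : G.edgeSet.Nonempty)
    (β : ℝ) (hβ : 1 < β) (D : GraphOrientation G)
    (hinv : ∀ w : V,
      min (D.outDeg w : ℝ) (β * arboricity G) ≤
        ((Finset.univ.filter fun x => D.Valid w x).card : ℝ))
    (r : V) (i : ℕ) (hi : 1 ≤ i)
    (hr : β * arboricity G + i < (D.outDeg r : ℝ)) :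
    ∀ j : ℕ, 1 ≤ j → j ≤ i → (β : ℝ) ^ j < (Nat.card (reachSet D r j) : ℝ) := by
  have step : ∀ j, j + 1 ≤ i → β ^ j ≤ (Nat.card (reachSet D r j) : ℝ) →
      β ^ (j + 1) < (Nat.card (reachSet D r (j + 1)) : ℝ) := by
    intro j hj hcard
    have hji : (j : ℝ) ≤ i := by exact_mod_cast (by omega : j ≤ i)
    have hgrow := D.mul_card_reachSet_add_one_le hE hinv (r := r) (j := j) (by linarith)
    have hmul := mul_le_mul_of_nonneg_left hcard (by linarith : 0 ≤ β)
    rw [pow_succ']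
    linarith
  have weak : ∀ j ≤ i, β ^ j ≤ (Nat.card (reachSet D r j) : ℝ) := by
    intro j
    induction j with
    | zero =>
      intro _
      have : Nonempty (reachSet D r 0) := ⟨⟨r, D.self_mem_reachSet r 0⟩⟩
      rw [pow_zero]
      exact_mod_cast Nat.card_pos (α := reachSet D r 0)
    | succ j ih => exact fun hj => (step j hj (ih (by omega))).le
  intro j h1 hj
  obtain ⟨k, rfl⟩ := Nat.exists_eq_add_of_le' h1
  exact step k hj (weak k (by omega))
end
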